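/- Let n ≥ 3 and let x, y, z be three distinct elements of M_{n,n} such that {x, y, z} is an antichain (the three elements are pairwise incomparable). Then all three meet-distributive identities fail: x ∧ (y ∨ z) ≠ (x ∧ y) ∨ (x ∧ z), y ∧ (x ∨ z) ≠ (y ∧ x) ∨ (y ∧ z), and z ∧ (x ∨ y) ≠ (z ∧ x) ∨ (z ∧ y). -/

import Mathlib

/-- The underlying set of the lattice `M_{n,n}`: a bottom element `0`, a top
element `1`, and two levels `a₁, …, aₙ` and `b₁, …, bₙ`.  Here `a i` (for
`i : Fin n`) stands for `a_{i+1}` and `b j` for `b_{j+1}`, so the link elements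
are `aₙ = a ⟨n-1, _⟩` and `b₁ = b ⟨0, _⟩`. -/
inductive Mnn (n : ℕ) : Type where
  | bot : Mnn n
  | top : Mnn n
  | a : Fin n → Mnn n
  | b : Fin n → Mnn n
deriving DecidableEq

namespace Mnn

/-- The order of `M_{n,n}`: `0` is least, `1` is greatest, `aᵢ ≤ b₁` for every
`i`, `aₙ ≤ bⱼ` for every `j`, and there are no other comparabilities besides
those forced by reflexivity. -/
def le {n : ℕ} : Mnn n → Mnn n → Prop
  | .bot, _ => True
  | .top, .top => True
  | .top, .bot => False
  | .top, .a _ => False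
  | .top, .b _ => False
  | .a _, .top => True
  | .a _, .bot => False
  | .a i, .a j => i = j
  | .a i, .b j => (j : ℕ) = 0 ∨ (i : ℕ) = n - 1
  | .b _, .top => True
  | .b _, .bot => False
  | .b _, .a _ => False
  | .b i, .b j => i = j

/-- The join operation of `M_{n,n}`. -/
def sup {n : ℕ} : Mnn n → Mnn n → Mnn n
  | .bot, x => x
  | .top, _ => .top
  | .a i, .bot => .a i
  | .a _, .top => .top
  | .a i, .a j => if i = j then .a i else .b ⟨0, Nat.lt_of_le_of_lt (Nat.zero_le _) i.isLt⟩
  | .a i, .b j => if (j : ℕ) = 0 ∨ (i : ℕ) = n - 1 then .b j else .top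
  | .b i, .bot => .b i
  | .b _, .top => .top
  | .b i, .a j => if (i : ℕ) = 0 ∨ (j : ℕ) = n - 1 then .b i else .top
  | .b i, .b j => if i = j then .b i else .top

/-- The meet operation of `M_{n,n}`. -/
def inf {n : ℕ} : Mnn n → Mnn n → Mnn n
  | .bot, _ => .bot
  | .top, x => x
  | .a _, .bot => .bot
  | .a i, .top => .a i
  | .a i, .a j => if i = j then .a i else .bot
  | .a i, .b j => if (j : ℕ) = 0 ∨ (i : ℕ) = n - 1 then .a i else .bot
  | .b _, .bot => .bot
  | .b i, .top => .b i
  | .b i, .a j => if (i : ℕ) = 0 ∨ (j : ℕ) = n - 1 then .a j else .bot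
  | .b i, .b j => if i = j then .b i
      else .a ⟨n - 1, Nat.sub_lt (Nat.lt_of_le_of_lt (Nat.zero_le _) i.isLt) Nat.one_pos⟩

theorem le_refl' {n : ℕ} (x : Mnn n) : le x x := by cases x <;> simp [le]

theorem le_trans' {n : ℕ} (x y z : Mnn n) (hxy : le x y) (hyz : le y z) : le x z := by
  cases x <;> cases y <;> cases z <;> simp_all [le] <;> omega

theorem le_antisymm' {n : ℕ} (x y : Mnn n) (hxy : le x y) (hyx : le y x) : x = y := by
  cases x <;> cases y <;> simp_all [le]

theorem le_sup_left' {n : ℕ} (x y : Mnn n) : le x (sup x y) := by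
  cases x <;> cases y <;> dsimp only [sup] <;> (try split_ifs) <;> simp_all [le]

theorem le_sup_right' {n : ℕ} (x y : Mnn n) : le y (sup x y) := by
  cases x <;> cases y <;> dsimp only [sup] <;> (try split_ifs) <;> simp_all [le]

theorem sup_le' {n : ℕ} (x y z : Mnn n) (hxz : le x z) (hyz : le y z) :
    le (sup x y) z := by
  cases x <;> cases y <;> cases z <;> dsimp only [sup] <;> (try split_ifs) <;>
    simp_all [le, Fin.ext_iff] <;> omega

theorem inf_le_left' {n : ℕ} (x y : Mnn n) : le (inf x y) x := by
  cases x <;> cases y <;> dsimp only [inf] <;> (try split_ifs) <;> simp_all [le]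

theorem inf_le_right' {n : ℕ} (x y : Mnn n) : le (inf x y) y := by
  cases x <;> cases y <;> dsimp only [inf] <;> (try split_ifs) <;> simp_all [le]

theorem le_inf' {n : ℕ} (x y z : Mnn n) (hxy : le x y) (hxz : le x z) :
    le x (inf y z) := by
  cases x <;> cases y <;> cases z <;> dsimp only [inf] <;> (try split_ifs) <;>
    simp_all [le, Fin.ext_iff] <;> omega

/-- `M_{n,n}` is a lattice. -/
instance instLattice (n : ℕ) : Lattice (Mnn n) where
  le := le
  sup := sup
  inf := inf
  le_refl := le_refl'
  le_trans := le_trans'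
  le_antisymm := le_antisymm'
  le_sup_left := le_sup_left'
  le_sup_right := le_sup_right'
  sup_le := sup_le'
  inf_le_left := inf_le_left'
  inf_le_right := inf_le_right'
  le_inf := le_inf'

/-- `M_{n,n}* = M_{n,n} ∖ {0, 1}`, the set of non-identity elements. -/
def star (n : ℕ) : Set (Mnn n) := {x | x ≠ .bot ∧ x ≠ .top}

/-- The level `{a₁, …, aₙ}` of `M_{n,n}`. -/
def aLevel (n : ℕ) : Set (Mnn n) := Set.range Mnn.a

/-- The level `{b₁, …, bₙ}` of `M_{n,n}`. -/
def bLevel (n : ℕ) : Set (Mnn n) := Set.range Mnn.b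

/-- The link element `aₙ` of the level `{a₁, …, aₙ}`. -/
def aLink (n : ℕ) (h : 0 < n) : Mnn n := .a ⟨n - 1, Nat.sub_lt h Nat.one_pos⟩

/-- The link element `b₁` of the level `{b₁, …, bₙ}`. -/
def bLink (n : ℕ) (h : 0 < n) : Mnn n := .b ⟨0, h⟩

end Mnn

/-- `L` is `ST`-meet distributive. -/
def IsSTMeetDistrib {α : Type*} [Lattice α] (S T : Set α) : Prop :=
  ∀ s ∈ S, ∀ t₁ ∈ T, ∀ t₂ ∈ T, s ⊓ (t₁ ⊔ t₂) = (s ⊓ t₁) ⊔ (s ⊓ t₂)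

/-- `L` is `ST`-join distributive. -/
def IsSTJoinDistrib {α : Type*} [Lattice α] (S T : Set α) : Prop :=
  ∀ s ∈ S, ∀ t₁ ∈ T, ∀ t₂ ∈ T, s ⊔ (t₁ ⊓ t₂) = (s ⊔ t₁) ⊓ (s ⊔ t₂)

/-- `L` is `ST`-distributive. -/
def IsSTDistrib {α : Type*} [Lattice α] (S T : Set α) : Prop :=
  IsSTMeetDistrib S T ∧ IsSTJoinDistrib S T

/-- `(S, T)` is a maximal `ST`-pair of `M_{n,n}` (subject to the conditions of
the search problem: `S, T ⊆ M_{n,n}*`, `S ∩ T = ∅`, `S ≠ ∅`, `T ≠ ∅`). -/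
def MaximalSTPair (n : ℕ) (S T : Set (Mnn n)) : Prop :=
  S ⊆ Mnn.star n ∧ T ⊆ Mnn.star n ∧ S ∩ T = ∅ ∧ S.Nonempty ∧ T.Nonempty ∧
  IsSTDistrib S T ∧
  (¬ ∃ S' : Set (Mnn n), S ⊂ S' ∧ S' ⊆ Mnn.star n ∧ S' ∩ T = ∅ ∧ IsSTDistrib S' T) ∧
  (¬ ∃ T' : Set (Mnn n), T ⊂ T' ∧ T' ⊆ Mnn.star n ∧ S ∩ T' = ∅ ∧ IsSTDistrib S T')

/-!
The link elements control every incomparable pair `x, y` of `M_{n,n}`: `x ⊓ y` lies below the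
atom `aₙ`, and `x ⊔ y` above the coatom `b₁`. Let `x, y, z` be an antichain.

If `x ≤ y ⊔ z`, distributivity would write `x` as the join of `x ⊓ y` and `x ⊓ z`, so `x ≤ aₙ`;
as `aₙ` is an atom, both meets, being smaller than `x`, vanish, and so does `x`.

Otherwise `y ⊔ z = b₁`, so `y` and `z` are atoms, which meet `x` in `0`; but `x`, not lying
below `b₁`, is above `aₙ`, so `x ⊓ (y ⊔ z)` is not `0`.
-/

section

variable {α : Type*} [Lattice α] [OrderBot α] {c x y z : α}

theorem inf_sup_ne_of_le_sup_of_inf_le_atom (hc : IsAtom c) (hy : x ⊓ y ≤ c) (hz : x ⊓ z ≤ c)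
    (hx : x ≤ y ⊔ z) (hxy : ¬ x ≤ y) (hxz : ¬ x ≤ z) :
    x ⊓ (y ⊔ z) ≠ (x ⊓ y) ⊔ (x ⊓ z) := by
  intro h
  have hx_eq : x = (x ⊓ y) ⊔ (x ⊓ z) := by rwa [inf_eq_left.2 hx] at h
  have hxc : x ≤ c := hx_eq.trans_le (sup_le hy hz)
  have hy_bot : x ⊓ y = ⊥ := hc.2 _ ((inf_lt_left.2 hxy).trans_le hxc)
  have hz_bot : x ⊓ z = ⊥ := hc.2 _ ((inf_lt_left.2 hxz).trans_le hxc)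
  have hx_bot : x = ⊥ := by rwa [hy_bot, hz_bot, bot_sup_eq] at hx_eq
  exact hxy (hx_bot.trans_le bot_le)

theorem inf_sup_ne_of_disjoint_of_not_disjoint_sup (hy : Disjoint x y) (hz : Disjoint x z)
    (hyz : ¬ Disjoint x (y ⊔ z)) : x ⊓ (y ⊔ z) ≠ (x ⊓ y) ⊔ (x ⊓ z) := by
  rw [hy.eq_bot, hz.eq_bot, bot_sup_eq]
  exact fun h => hyz (disjoint_iff.2 h)

end

namespace Mnn

variable {n : ℕ} {x y z : Mnn n} {i j : Fin n}

instance instBoundedOrder (n : ℕ) : BoundedOrder (Mnn n) where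
  bot := .bot
  bot_le _ := trivial
  top := .top
  le_top x := by cases x <;> trivial

theorem a_le_a_iff : a i ≤ a j ↔ i = j :=
  Iff.rfl

theorem b_le_b_iff : b i ≤ b j ↔ i = j :=
  Iff.rfl

theorem isAtom_a (i : Fin n) : IsAtom (a i) := by
  refine ⟨fun h => h.le, fun x hx => ?_⟩
  cases x with
  | bot => rfl
  | top => exact hx.le.elim
  | a j => exact absurd (congrArg a (a_le_a_iff.1 hx.le)) hx.ne
  | b j => exact hx.le.elim

theorem isCoatom_b (j : Fin n) : IsCoatom (b j) := by
  refine ⟨fun h => h.ge, fun x hx => ?_⟩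
  cases x with
  | bot => exact hx.le.elim
  | top => rfl
  | a i => exact hx.le.elim
  | b i => exact absurd (congrArg b (b_le_b_iff.1 hx.le)) hx.ne

theorem isAtom_of_lt_b (hx : x < b j) (hx_bot : x ≠ ⊥) : IsAtom x := by
  cases x with
  | bot => exact absurd rfl hx_bot
  | top => exact hx.le.elim
  | a i => exact isAtom_a i
  | b i => exact absurd (congrArg b (b_le_b_iff.1 hx.le)) hx.ne

theorem a_sup_a_of_ne (hn : 0 < n) (hij : i ≠ j) : a i ⊔ a j = bLink n hn :=
  if_neg hij

theorem b_inf_b_of_ne (hn : 0 < n) (hij : i ≠ j) : b i ⊓ b j = aLink n hn :=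
  if_neg hij

theorem a_le_bLink (hn : 0 < n) (i : Fin n) : a i ≤ bLink n hn :=
  Or.inl rfl

theorem aLink_le_b (hn : 0 < n) (j : Fin n) : aLink n hn ≤ b j :=
  Or.inr rfl

theorem aLink_le_or_le_bLink (hn : 0 < n) (x : Mnn n) : aLink n hn ≤ x ∨ x ≤ bLink n hn := by
  cases x with
  | bot => exact .inr bot_le
  | top => exact .inl le_top
  | a i => exact .inr (a_le_bLink hn i)
  | b j => exact .inl (aLink_le_b hn j)

theorem eq_a_or_eq_b_of_incompRel (h : IncompRel (· ≤ ·) x y) :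
    (∃ i, x = a i) ∨ ∃ j, x = b j := by
  cases x with
  | bot => exact absurd bot_le h.1
  | top => exact absurd le_top h.2
  | a i => exact .inl ⟨i, rfl⟩
  | b j => exact .inr ⟨j, rfl⟩

theorem pos_of_incompRel (h : IncompRel (· ≤ ·) x y) : 0 < n := by
  obtain ⟨i, -⟩ | ⟨j, -⟩ := eq_a_or_eq_b_of_incompRel h
  exacts [i.pos, j.pos]

theorem inf_le_aLink_of_incompRel (hn : 0 < n) (h : IncompRel (· ≤ ·) x y) :
    x ⊓ y ≤ aLink n hn := by
  rcases eq_a_or_eq_b_of_incompRel h with ⟨i, rfl⟩ | ⟨i, rfl⟩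
  · exact ((isAtom_a i).not_le_iff_disjoint.1 h.1).le_bot.trans bot_le
  rcases eq_a_or_eq_b_of_incompRel h.symm with ⟨j, rfl⟩ | ⟨j, rfl⟩
  · exact ((isAtom_a j).not_le_iff_disjoint.1 h.2).symm.le_bot.trans bot_le
  · exact (b_inf_b_of_ne hn (mt b_le_b_iff.2 h.1)).le

theorem bLink_le_sup_of_incompRel (hn : 0 < n) (h : IncompRel (· ≤ ·) x y) :
    bLink n hn ≤ x ⊔ y := by
  rcases eq_a_or_eq_b_of_incompRel h with ⟨i, rfl⟩ | ⟨i, rfl⟩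
  · rcases eq_a_or_eq_b_of_incompRel h.symm with ⟨j, rfl⟩ | ⟨j, rfl⟩
    · exact (a_sup_a_of_ne hn (mt a_le_a_iff.2 h.1)).ge
    · exact le_top.trans ((isCoatom_b j).not_le_iff_codisjoint.1 h.1).symm.top_le
  · exact le_top.trans ((isCoatom_b i).not_le_iff_codisjoint.1 h.2).top_le

theorem inf_sup_ne_of_incompRel (hxy : IncompRel (· ≤ ·) x y) (hxz : IncompRel (· ≤ ·) x z)
    (hyz : IncompRel (· ≤ ·) y z) : x ⊓ (y ⊔ z) ≠ (x ⊓ y) ⊔ (x ⊓ z) := by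
  have hn : 0 < n := pos_of_incompRel hxy
  by_cases hx : x ≤ y ⊔ z
  · exact inf_sup_ne_of_le_sup_of_inf_le_atom (isAtom_a _) (inf_le_aLink_of_incompRel hn hxy)
      (inf_le_aLink_of_incompRel hn hxz) hx hxy.1 hxz.1
  · have hsup_ne_top : y ⊔ z ≠ ⊤ := fun h => hx (le_top.trans_eq h.symm)
    have hsup : y ⊔ z = bLink n hn :=
      ((isCoatom_b _).le_iff.1 (bLink_le_sup_of_incompRel hn hyz)).resolve_left hsup_ne_top
    have hy : IsAtom y :=
      isAtom_of_lt_b ((left_lt_sup.2 hyz.2).trans_eq hsup) fun h => hyz.1 (h.trans_le bot_le)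
    have hz : IsAtom z :=
      isAtom_of_lt_b ((right_lt_sup.2 hyz.1).trans_eq hsup) fun h => hyz.2 (h.trans_le bot_le)
    have hxy_disj : Disjoint x y := (hy.not_le_iff_disjoint.1 hxy.2).symm
    have hxz_disj : Disjoint x z := (hz.not_le_iff_disjoint.1 hxz.2).symm
    refine inf_sup_ne_of_disjoint_of_not_disjoint_sup hxy_disj hxz_disj fun hdisj => ?_
    rw [hsup] at hx hdisj
    have hlink_le : aLink n hn ≤ x := (aLink_le_or_le_bLink hn x).resolve_right hx
    exact (isAtom_a _).1 (le_bot_iff.1 (hdisj hlink_le (a_le_bLink hn _)))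

end Mnn

/-- In `M_{n,n}` (`n ≥ 3`), no antichain of three distinct elements
distributes: all three meet-distributive identities fail. -/
theorem antichains_not_distributive_in_Mnn (n : ℕ) (hn : 3 ≤ n) (x y z : Mnn n)
    (hxy : x ≠ y) (hxz : x ≠ z) (hyz : y ≠ z)
    (ixy : ¬ x ≤ y ∧ ¬ y ≤ x) (ixz : ¬ x ≤ z ∧ ¬ z ≤ x)
    (iyz : ¬ y ≤ z ∧ ¬ z ≤ y) :
    x ⊓ (y ⊔ z) ≠ (x ⊓ y) ⊔ (x ⊓ z) ∧
    y ⊓ (x ⊔ z) ≠ (y ⊓ x) ⊔ (y ⊓ z) ∧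
    z ⊓ (x ⊔ y) ≠ (z ⊓ x) ⊔ (z ⊓ y) := by
  have hxy_inc : IncompRel (· ≤ ·) x y := ixy
  have hxz_inc : IncompRel (· ≤ ·) x z := ixz
  have hyz_inc : IncompRel (· ≤ ·) y z := iyz
  exact ⟨Mnn.inf_sup_ne_of_incompRel hxy_inc hxz_inc hyz_inc,
    Mnn.inf_sup_ne_of_incompRel hxy_inc.symm hyz_inc hxz_inc,
    Mnn.inf_sup_ne_of_incompRel hxz_inc.symm hyz_inc.symm hxy_inc⟩
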